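/- Let $R$ be a commutative ring, let $n \ge 1$, let $t_0, t_1, \dots, t_n \in R$, and let $k \ge 0$ be a natural number. Let $M$ be the $(n+1) \times (n+1)$ matrix whose $i$-th row (for $i = 0,1,\dots,n$) is $(t_i^{\,n+k},\; t_i^{\,n-1},\; t_i^{\,n-2},\; \dots,\; t_i,\; 1)$. Then $\det M = h_k(t_0,\dots,t_n) \cdot \prod_{0 \le i < j \le n} (t_i - t_j)$, where $h_k(t_0,\dots,t_n) = \sum_{0 \le i_1 \le i_2 \le \dots \le i_k \le n} t_{i_1} t_{i_2} \cdots t_{i_k}$ is the complete homogeneous symmetric polynomial of degree $k$ (with $h_0 = 1$). -/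

import Mathlib

/-- The complete homogeneous symmetric polynomial of degree `k` in the variables
`t i`, `i : ι`: the sum of all monomials of degree `k` (with `h 0 = 1`). -/
noncomputable def completeHomogeneous {ι : Type*} [Fintype ι] [DecidableEq ι]
    {R : Type*} [CommRing R] (k : ℕ) (t : ι → R) : R :=
  ∑ mlt ∈ (Finset.univ : Finset ι).sym k, ((mlt : Multiset ι).map t).prod

section CompleteHomogeneous

open Polynomial Matrix

variable {ι κ R : Type*} [Fintype ι] [DecidableEq ι] [Fintype κ] [DecidableEq κ] [CommRing R]

theorem completeHomogeneous_eq_sum_univ (k : ℕ) (t : ι → R) :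
    completeHomogeneous k t = ∑ s : Sym ι k, ((s : Multiset ι).map t).prod := by
  rw [completeHomogeneous, Finset.sym_univ]

theorem completeHomogeneous_zero (t : ι → R) : completeHomogeneous 0 t = 1 := by
  rw [completeHomogeneous, Finset.sym_zero, Finset.sum_singleton]
  rfl

theorem completeHomogeneous_succ_of_isEmpty [IsEmpty ι] (k : ℕ) (t : ι → R) :
    completeHomogeneous (k + 1) t = 0 := by
  rw [completeHomogeneous_eq_sum_univ, Fintype.sum_empty]

theorem completeHomogeneous_comp_equiv (e : κ ≃ ι) (k : ℕ) (t : ι → R) :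
    completeHomogeneous k (t ∘ e) = completeHomogeneous k t := by
  simp only [completeHomogeneous_eq_sum_univ]
  refine Fintype.sum_equiv (Sym.equivCongr e) _ _ fun s => ?_
  simp [Sym.equivCongr, Multiset.map_map]

theorem completeHomogeneous_succ_option (k : ℕ) (t : Option ι → R) :
    completeHomogeneous (k + 1) t =
      completeHomogeneous (k + 1) (t ∘ some) + t none * completeHomogeneous k t := by
  simp only [completeHomogeneous_eq_sum_univ]
  rw [← symOptionSuccEquiv.symm.sum_comp, Fintype.sum_sum_type, add_comm, Finset.mul_sum]
  congr 1
  · refine Finset.sum_congr rfl fun s _ => ?_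
    simp [symOptionSuccEquiv, Multiset.map_map]
  · refine Finset.sum_congr rfl fun s _ => ?_
    simp only [symOptionSuccEquiv, Equiv.coe_fn_symm_mk, SymOptionSuccEquiv.decode_inl]
    rw [Sym.coe_cons, Multiset.map_cons, Multiset.prod_cons]

theorem completeHomogeneous_succ_vecCons {m : ℕ} (k : ℕ) (x : R) (s : Fin m → R) :
    completeHomogeneous (k + 1) (vecCons x s) =
      completeHomogeneous (k + 1) s + x * completeHomogeneous k (vecCons x s) := by
  have h := completeHomogeneous_succ_option k (vecCons x s ∘ (finSuccEquiv m).symm)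
  simp only [completeHomogeneous_comp_equiv] at h
  rw [h]
  congr 2

theorem completeHomogeneous_vecCons_swap {m : ℕ} (k : ℕ) (x y : R) (s : Fin m → R) :
    completeHomogeneous k (vecCons x (vecCons y s)) =
      completeHomogeneous k (vecCons y (vecCons x s)) := by
  rw [← completeHomogeneous_comp_equiv (Equiv.swap 0 1)]
  congr 1
  funext i
  refine Fin.cases ?_ (fun i => Fin.cases ?_ (fun i => ?_) i) i
  · simp
  · simp
  · rw [Function.comp_apply, Equiv.swap_apply_of_ne_of_ne (by simp) (by simp [Fin.ext_iff])]
    simp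

/-- The divided difference of `completeHomogeneous (k + 1)` in one of its variables. -/
theorem completeHomogeneous_vecCons_sub {m : ℕ} (k : ℕ) (x y : R) (s : Fin m → R) :
    completeHomogeneous (k + 1) (vecCons x s) - completeHomogeneous (k + 1) (vecCons y s) =
      (x - y) * completeHomogeneous k (vecCons x (vecCons y s)) := by
  have hx := completeHomogeneous_succ_vecCons k x (vecCons y s)
  have hy := completeHomogeneous_succ_vecCons k y (vecCons x s)
  rw [completeHomogeneous_vecCons_swap, completeHomogeneous_vecCons_swap k] at hy
  linear_combination hx - hy

theorem completeHomogeneous_vecCons_of_isEmpty (k : ℕ) (x : R) (s : Fin 0 → R) :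
    completeHomogeneous k (vecCons x s) = x ^ k := by
  induction k with
  | zero => simp [completeHomogeneous_zero]
  | succ k ih =>
    rw [completeHomogeneous_succ_vecCons, completeHomogeneous_succ_of_isEmpty, ih]
    ring

/-- Newton interpolation of `x ^ (m + k)` at the nodes `s`, with explicit error term. -/
theorem exists_pow_eq_eval_add_completeHomogeneous_mul_prod {m : ℕ} (s : Fin m → R) (k : ℕ) :
    ∃ r : R[X], r.degree < m ∧ ∀ x : R,
      x ^ (m + k) = r.eval x + completeHomogeneous k (vecCons x s) * ∏ j, (x - s j) := by
  induction m generalizing k with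
  | zero => exact ⟨0, by simp, fun x => by simp [completeHomogeneous_vecCons_of_isEmpty]⟩
  | succ m ih =>
    obtain ⟨y, s, rfl⟩ : ∃ y s', s = vecCons y s' := ⟨vecHead s, vecTail s, by simp⟩
    obtain ⟨r, hr, hrx⟩ := ih s (k + 1)
    refine ⟨r + C (completeHomogeneous (k + 1) (vecCons y s)) * ∏ j, (X - C (s j)), ?_,
      fun x => ?_⟩
    · have hP : (∏ j, (X - C (s j))).degree ≤ (m : WithBot ℕ) := by
        refine (degree_prod_le _ _).trans
          ((Finset.sum_le_sum fun j _ => degree_X_sub_C_le _).trans ?_)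
        simp
      have hm : (m : WithBot ℕ) < ((m + 1 : ℕ) : WithBot ℕ) := by exact_mod_cast m.lt_succ_self
      refine (degree_add_le _ _).trans_lt (max_lt (hr.trans hm) ?_)
      rw [← smul_eq_C_mul]
      exact (degree_smul_le _ _).trans_lt (hP.trans_lt hm)
    · have h := completeHomogeneous_vecCons_sub k x y s
      rw [show m + 1 + k = m + (k + 1) by ring, hrx x, Fin.prod_univ_succ]
      simp only [eval_add, eval_mul, eval_C, eval_prod, eval_sub, eval_X, cons_val_zero,
        cons_val_succ]
      linear_combination (∏ j, (x - s j)) * h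

/-- The remainder of `X ^ (n + k)` modulo `∏ i, (X - C (t i))` has leading coefficient
`completeHomogeneous k t` in degree `n`. -/
theorem exists_pow_eq_eval_coeff_eq_completeHomogeneous {n : ℕ} (t : Fin (n + 1) → R) (k : ℕ) :
    ∃ p : R[X], p.natDegree < n + 1 ∧ p.coeff n = completeHomogeneous k t ∧
      ∀ i, t i ^ (n + k) = p.eval (t i) := by
  nontriviality R
  obtain ⟨r, hr, hrx⟩ := exists_pow_eq_eval_add_completeHomogeneous_mul_prod (vecTail t) k
  have hmonic : (∏ j, (X - C (vecTail t j))).Monic := monic_prod_X_sub_C _ _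
  have hdeg : (∏ j, (X - C (vecTail t j))).natDegree = n := by
    simp
  refine ⟨r + C (completeHomogeneous k t) * ∏ j, (X - C (vecTail t j)), ?_, ?_, fun i => ?_⟩
  · refine Nat.lt_succ_of_le ((natDegree_add_le _ _).trans (max_le ?_ ?_))
    · exact natDegree_le_of_degree_le hr.le
    · exact (natDegree_C_mul_le _ _).trans hdeg.le
  · have h1 := hmonic.coeff_natDegree
    rw [hdeg] at h1
    rw [coeff_add, coeff_C_mul, h1, coeff_eq_zero_of_degree_lt hr, zero_add, mul_one]
  · rw [hrx]
    simp only [eval_add, eval_mul, eval_C, eval_prod, eval_sub, eval_X]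
    congr 1
    refine Fin.cases ?_ (fun j => ?_) i
    · rw [show vecCons (t 0) (vecTail t) = t from cons_head_tail t]
    · rw [Finset.prod_eq_zero (Finset.mem_univ j) (sub_self (t j.succ)), mul_zero, mul_zero]

end CompleteHomogeneous

theorem det_jacobi_trudy_one_row {R : Type*} [CommRing R] (n : ℕ) (hn : 1 ≤ n)
    (t : Fin (n + 1) → R) (k : ℕ) :
    (Matrix.of fun i j : Fin (n + 1) =>
        if (j : ℕ) = 0 then t i ^ (n + k) else t i ^ (n - (j : ℕ))).det =
      completeHomogeneous k t *
        ∏ i : Fin (n + 1), ∏ j ∈ Finset.univ.filter (fun j => i < j), (t i - t j) := by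
  obtain ⟨p, hdeg, hcoeff, hp⟩ := exists_pow_eq_eval_coeff_eq_completeHomogeneous t k
  have hdet := Matrix.det_updateCol_sum (Matrix.projVandermonde 1 t) 0 fun j => p.coeff j.rev
  have hprod := Matrix.det_projVandermonde 1 t
  simp only [Pi.one_apply, one_mul] at hprod
  rw [hprod, smul_eq_mul] at hdet
  simp only [Fin.rev_zero, Fin.val_last, hcoeff] at hdet
  convert hdet using 2
  · ext i j
    refine Fin.cases ?_ (fun j => ?_) j
    · simp only [Matrix.of_apply, Fin.val_zero, if_true, Matrix.updateCol_self, smul_eq_mul,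
        Matrix.projVandermonde_apply, Pi.one_apply, one_pow, one_mul]
      rw [hp, Polynomial.eval_eq_sum_range' hdeg, Finset.sum_range]
      exact (Equiv.sum_comp Fin.revPerm fun j : Fin (n + 1) => p.coeff j * t i ^ (j : ℕ)).symm
    · rw [Matrix.updateCol_ne (Fin.succ_ne_zero j)]
      simp [Matrix.projVandermonde_apply, Fin.val_rev]
  · refine Finset.prod_congr rfl fun i _ => Finset.prod_congr ?_ fun _ _ => rfl
    ext j
    simp
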